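/- Let G be a simple graph and let w_0, w_1, …, w_ℓ be a walk in G with w_0 = w_ℓ and ℓ ≥ 1. If (ℓ : ℕ∞) < girth(G), then there exists an index i with 1 ≤ i ≤ ℓ − 1 such that w_{i+1} = w_{i−1}. Equivalently, every closed non-backtracking walk of positive length in G has length at least girth(G). -/

import Mathlib

theorem nonbacktracking_isPath_aux {V : Type*} (G : SimpleGraph V) {u v : V}
    (W : G.Walk u v) (hgirth : (W.length : ℕ∞) < G.egirth)
    (hnb : ∀ i : ℕ, i + 2 ≤ W.length → W.getVert (i + 2) ≠ W.getVert i) :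
    W.IsPath := by
  classical
  induction W with
  | nil => simp
  | @cons u v w h p ih =>
    have hp : p.IsPath := by
      apply ih
      · refine lt_of_le_of_lt ?_ hgirth
        simp
      · intro i hi
        have := hnb (i + 1) (by simp; omega)
        simpa using this
    rw [SimpleGraph.Walk.cons_isPath_iff]
    refine ⟨hp, fun hu => ?_⟩
    have hq : (p.takeUntil u hu).IsPath := hp.takeUntil hu
    have hlen := p.length_takeUntil_le_length hu
    by_cases he : s(u, v) ∈ (p.takeUntil u hu).edges
    · have hspec := p.take_spec hu
      generalize p.takeUntil u hu = q at *
      cases q with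
      | nil => exact h.ne rfl
      | @cons _ x _ h' q' =>
        rw [SimpleGraph.Walk.cons_isPath_iff] at hq
        rw [SimpleGraph.Walk.edges_cons, List.mem_cons] at he
        rcases he with he | he
        · have hx : x = u := by
            rw [Sym2.eq_iff] at he
            rcases he with ⟨a, _⟩ | ⟨a, _⟩
            · exact absurd a h.ne
            · exact a.symm
          apply hnb 0
          · simp at hlen ⊢
            omega
          · rw [← hspec]
            simp [hx]
        · exact hq.2 (SimpleGraph.Walk.snd_mem_support_of_mem_edges _ he)
    · have hc := (SimpleGraph.Walk.cons_isCycle_iff _ h).2 ⟨hq, he⟩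
      have h1 := SimpleGraph.egirth_le_length hc
      refine absurd (lt_of_le_of_lt ?_ hgirth) (not_lt.2 h1)
      rw [Nat.cast_le]
      simpa using hlen


/-- Every closed walk of positive length `ℓ` with `ℓ < girth G`
must backtrack: there is an index `1 ≤ i ≤ ℓ - 1` with `w_{i+1} = w_{i-1}`.
Equivalently, every closed non-backtracking walk of positive length has length
at least the girth. -/
theorem closed_walk_lt_girth_backtracks {V : Type*} (G : SimpleGraph V) {u : V}
    (W : G.Walk u u) (hlen : 1 ≤ W.length) (hgirth : (W.length : ℕ∞) < G.egirth) :
    ∃ i : ℕ, 1 ≤ i ∧ i ≤ W.length - 1 ∧ W.getVert (i + 1) = W.getVert (i - 1) := by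

  by_contra! hcon
  have hP := nonbacktracking_isPath_aux G W hgirth (fun i hi => by
    simpa using hcon (i + 1) (by omega) (by omega))
  rw [SimpleGraph.Walk.isPath_iff_eq_nil] at hP
  subst hP
  simp at hlen
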